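/- Let A ∈ ℂ^{n×n} be Schur stable, and B, C, D matrices of compatible dimensions. The squared H∞ norm μ_∞ = sup{‖z‖₂² : x₀=0, x_{k+1}=Ax_k+Bw_k, z_k = Cx_k+Dw_k, ‖w‖₂²=1} satisfies μ_∞ < 1 if and only if there exists a Hermitian P such that [A*PA−P, A*PB; B*PA, B*PB] + [C*C, C*D; D*C, D*D − I] ≺ 0. -/

import Mathlib

open Matrix
open scoped ComplexOrder

/-- The squared `H∞` norm: supremum of the output energy over unit-energy disturbances. -/
noncomputable def muInfty {n m p : ℕ} (A : Matrix (Fin n) (Fin n) ℂ)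
    (B : Matrix (Fin n) (Fin m) ℂ) (C : Matrix (Fin p) (Fin n) ℂ)
    (D : Matrix (Fin p) (Fin m) ℂ) : ℝ :=
  sSup {r : ℝ | ∃ (w : ℕ → Fin m → ℂ) (x : ℕ → Fin n → ℂ) (z : ℕ → Fin p → ℂ),
    Summable (fun k => ∑ i, ‖w k i‖ ^ 2) ∧
    (∑' k, ∑ i, ‖w k i‖ ^ 2) = 1 ∧
    x 0 = 0 ∧ (∀ k, x (k + 1) = A.mulVec (x k) + B.mulVec (w k)) ∧
    (∀ k, z k = C.mulVec (x k) + D.mulVec (w k)) ∧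
    r = ∑' k, ∑ i, ‖z k i‖ ^ 2}

/-! On finite-energy signals, a Schur stable system acts as a bounded input-output operator `T` on
`ℓ²` with `‖T‖² = μ∞`. If `P` solves the inequality, then summing the dissipation inequality along
the `ℓ²` trajectory telescopes the storage terms and gives `‖T w‖² ≤ (1 - ε) ‖w‖²`. Conversely, if
`‖T‖ < 1`, then `‖T‖ < 1` survives a small additional penalty on the state and the input; the
supremum of `penalized output energy - input energy` over the inputs is attained and, by
completing the square, is a quadratic form `⟪x, P x⟫` in the initial state. Splitting off the
first step of the input is Bellman's inequality for this value function, and the penalty makes it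
strict. -/

open Filter Topology
open scoped InnerProductSpace

local notation "ℓ²(" E ")" => lp (fun _ : ℕ => E) 2

section Banach

theorem isUnit_one_sub_of_isTopologicallyNilpotent {R : Type*} [NormedRing R]
    [HasSummableGeomSeries R] {a : R} (ha : IsTopologicallyNilpotent a) : IsUnit (1 - a) := by
  have hnorm : Tendsto (fun k => ‖a ^ k‖) atTop (𝓝 0) := by
    rw [← norm_zero (E := R)]
    exact ha.norm
  obtain ⟨k, hk⟩ := (hnorm.eventually_lt_const one_pos).exists
  have hcomm : Commute (1 - a) (∑ i ∈ Finset.range k, a ^ i) :=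
    Commute.sum_right _ _ _ fun i _ => (Commute.one_left _).sub_left (Commute.self_pow a i)
  have hunit := isUnit_one_sub_of_norm_lt_one hk
  rw [← mul_neg_geom_sum] at hunit
  exact (hcomm.isUnit_mul_iff.1 hunit).1

theorem isTopologicallyNilpotent_of_spectralRadius_lt_one {R : Type*} [NormedRing R]
    [NormedAlgebra ℂ R] [CompleteSpace R] {a : R} (ha : spectralRadius ℂ a < 1) :
    IsTopologicallyNilpotent a := by
  obtain ⟨r, har, hr1⟩ := ENNReal.lt_iff_exists_nnreal_btwn.1 ha
  have hev :=
    (spectrum.pow_nnnorm_pow_one_div_tendsto_nhds_spectralRadius a).eventually_lt_const har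
  have hle : ∀ᶠ k : ℕ in atTop, ‖a ^ k‖ ≤ (r : ℝ) ^ k := by
    filter_upwards [hev, eventually_gt_atTop 0] with k hk hk0
    rw [one_div, ENNReal.rpow_inv_lt_iff (by exact_mod_cast hk0), ENNReal.rpow_natCast] at hk
    exact_mod_cast hk.le
  exact squeeze_zero_norm' hle (tendsto_pow_atTop_nhds_zero_of_lt_one r.2 (by exact_mod_cast hr1))

end Banach

section NormedSpace

variable {𝕜 E F G : Type*} [RCLike 𝕜] [NormedAddCommGroup E] [NormedSpace 𝕜 E]
  [NormedAddCommGroup F] [NormedSpace 𝕜 F] [NormedAddCommGroup G] [NormedSpace 𝕜 G]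

theorem inverse_one_sub_apply_eq_add {f : E →L[𝕜] E} (hf : IsUnit (1 - f)) (v : E) :
    Ring.inverse (1 - f) v = v + f (Ring.inverse (1 - f) v) :=
  sub_eq_iff_eq_add.1 (DFunLike.congr_fun (Ring.mul_inverse_cancel _ hf) v)

theorem opNorm_lt_one_of_norm_sq_le (f : E →L[𝕜] F) {c : ℝ} (hc : c < 1)
    (h : ∀ v, ‖f v‖ ^ 2 ≤ c * ‖v‖ ^ 2) : ‖f‖ < 1 := by
  refine (f.opNorm_le_bound (Real.sqrt_nonneg c) fun v => ?_).trans_lt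
    ((Real.sqrt_lt' one_pos).2 (by rwa [one_pow]))
  calc ‖f v‖ ≤ √(c * ‖v‖ ^ 2) := Real.le_sqrt_of_sq_le (h v)
    _ = √c * ‖v‖ := by rw [Real.sqrt_mul' c (sq_nonneg _), Real.sqrt_sq (norm_nonneg _)]

theorem sSup_norm_sq_image_sphere (f : E →L[𝕜] F) :
    sSup ((fun v => ‖f v‖ ^ 2) '' Metric.sphere 0 1) = ‖f‖ ^ 2 := by
  set S := (fun v => ‖f v‖ ^ 2) '' Metric.sphere 0 1
  have hbound : ∀ r ∈ S, r ≤ ‖f‖ ^ 2 := by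
    rintro _ ⟨v, hv, rfl⟩
    exact pow_le_pow_left₀ (norm_nonneg _)
      (f.unit_le_opNorm v (mem_sphere_zero_iff_norm.1 hv).le) 2
  have hnonneg : 0 ≤ sSup S := Real.sSup_nonneg <| by
    rintro _ ⟨v, -, rfl⟩
    exact sq_nonneg _
  refine (Real.sSup_le hbound (sq_nonneg _)).antisymm <|
    (Real.le_sqrt (norm_nonneg _) hnonneg).1 <|
    ContinuousLinearMap.opNorm_le_of_unit_norm (Real.sqrt_nonneg _) fun v hv => ?_
  exact Real.le_sqrt_of_sq_le <|
    le_csSup ⟨_, hbound⟩ (Set.mem_image_of_mem _ (mem_sphere_zero_iff_norm.2 hv))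

/-- The map `v ↦ (f v, g v)` into the `L²` product, so that the squared norm of its value is the
sum of the squared norms of `f v` and `g v`. -/
noncomputable def l2Prod (f : E →L[𝕜] F) (g : E →L[𝕜] G) : E →L[𝕜] WithLp 2 (F × G) :=
  (WithLp.prodContinuousLinearEquiv 2 𝕜 F G).symm.toContinuousLinearMap ∘L f.prod g

theorem norm_l2Prod_apply_sq (f : E →L[𝕜] F) (g : E →L[𝕜] G) (v : E) :
    ‖l2Prod f g v‖ ^ 2 = ‖f v‖ ^ 2 + ‖g v‖ ^ 2 :=
  WithLp.prod_norm_sq_eq_of_L2 _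

theorem hasSum_norm_sq (v : ℓ²(E)) : HasSum (fun k => ‖v k‖ ^ 2) (‖v‖ ^ 2) := by
  simpa using lp.hasSum_norm (p := 2) (by norm_num) v

theorem tsum_norm_sq_eq_one_iff {v : ℓ²(E)} :
    ∑' k, ‖v k‖ ^ 2 = 1 ↔ v ∈ Metric.sphere 0 1 := by
  rw [(hasSum_norm_sq v).tsum_eq, pow_eq_one_iff_of_nonneg (norm_nonneg v) two_ne_zero,
    mem_sphere_zero_iff_norm]

theorem memℓp_two_iff {v : ℕ → E} : Memℓp v 2 ↔ Summable fun k => ‖v k‖ ^ 2 := by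
  simpa using memℓp_gen_iff (p := 2) (E := fun _ : ℕ => E) (f := v) (by norm_num)

/-- The sequence `x, v 0, v 1, …`, for prepending the present value of a signal to its future. -/
def l2Cons (x : E) (v : ℓ²(E)) : ℓ²(E) :=
  ⟨fun | 0 => x | k + 1 => v k, memℓp_two_iff.2 <|
    (summable_nat_add_iff 1).1 (hasSum_norm_sq v).summable⟩

@[simp]
theorem l2Cons_zero (x : E) (v : ℓ²(E)) : l2Cons x v 0 = x := rfl

@[simp]
theorem l2Cons_succ (x : E) (v : ℓ²(E)) (k : ℕ) : l2Cons x v (k + 1) = v k := rfl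

theorem norm_l2Cons_sq (x : E) (v : ℓ²(E)) : ‖l2Cons x v‖ ^ 2 = ‖x‖ ^ 2 + ‖v‖ ^ 2 := by
  refine (hasSum_norm_sq _).unique ((hasSum_nat_add_iff' 1).1 ?_)
  simpa only [l2Cons_succ, Finset.sum_range_one, l2Cons_zero, add_sub_cancel_left]
    using hasSum_norm_sq v

/-- The right shift `v ↦ (0, v 0, v 1, …)`, i.e. the unit delay of signals. -/
def l2Shift : ℓ²(E) →ₗᵢ[𝕜] ℓ²(E) where
  toFun := l2Cons 0
  map_add' v w := by ext (_ | k) <;> simp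
  map_smul' c v := by ext (_ | k) <;> simp
  norm_map' v := by
    rw [← sq_eq_sq₀ (norm_nonneg _) (norm_nonneg _)]
    simp [norm_l2Cons_sq]

@[simp]
theorem l2Shift_apply (v : ℓ²(E)) : l2Shift (𝕜 := 𝕜) v = l2Cons 0 v := rfl

theorem norm_apply_le_norm_smul {ι : Type*} {p : ENNReal} (f : E →L[𝕜] F)
    (v : lp (fun _ : ι => E) p) (i : ι) : ‖f (v i)‖ ≤ ‖((‖f‖ : 𝕜) • v) i‖ := by
  simpa [norm_smul] using f.le_opNorm (v i)

theorem single_add_l2Shift (x : E) (v : ℓ²(E)) :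
    lp.single 2 0 x + l2Shift (𝕜 := 𝕜) v = l2Cons x v := by
  ext (_ | k) <;> simp

/-- The operator on `ℓᵖ` applying `f` to each term. -/
noncomputable def lpMap {ι : Type*} {p : ENNReal} [Fact (1 ≤ p)] (f : E →L[𝕜] F) :
    lp (fun _ : ι => E) p →L[𝕜] lp (fun _ : ι => F) p :=
  LinearMap.mkContinuousOfExistsBound
    { toFun := fun v => ⟨fun i => f (v i),
        (lp.memℓp ((‖f‖ : 𝕜) • v)).mono' (norm_apply_le_norm_smul f v)⟩
      map_add' := fun _ _ => lp.ext <| funext fun _ => map_add f _ _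
      map_smul' := fun _ _ => lp.ext <| funext fun _ => map_smul f _ _ }
    ⟨‖(‖f‖ : 𝕜)‖, fun v => (lp.norm_mono (one_pos.trans_le Fact.out).ne'
      (norm_apply_le_norm_smul f v)).trans_eq (norm_smul _ v)⟩

theorem norm_lpMap_le {ι : Type*} {p : ENNReal} [Fact (1 ≤ p)] (f : E →L[𝕜] F) :
    ‖(lpMap f : lp (fun _ : ι => E) p →L[𝕜] lp (fun _ : ι => F) p)‖ ≤ ‖f‖ :=
  ContinuousLinearMap.opNorm_le_bound _ (norm_nonneg _) fun v =>
    (lp.norm_mono (one_pos.trans_le Fact.out).ne' (norm_apply_le_norm_smul f v)).trans_eq <| by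
      rw [norm_smul, RCLike.norm_ofReal, abs_norm]

theorem lpMap_pow {ι : Type*} {p : ENNReal} [Fact (1 ≤ p)] (f : E →L[𝕜] E) (k : ℕ) :
    (lpMap f : lp (fun _ : ι => E) p →L[𝕜] lp (fun _ : ι => E) p) ^ k = lpMap (f ^ k) := by
  induction k with
  | zero => rfl
  | succ k ih => rw [pow_succ, ih, pow_succ]; rfl

theorem commute_l2Shift_lpMap (f : E →L[𝕜] E) :
    Commute (l2Shift.toContinuousLinearMap : ℓ²(E) →L[𝕜] ℓ²(E)) (lpMap f) := by
  ext v k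
  cases k with
  | zero => exact (map_zero f).symm
  | succ k => rfl

theorem isTopologicallyNilpotent_l2Shift_comp_lpMap {a : E →L[𝕜] E}
    (ha : IsTopologicallyNilpotent a) :
    IsTopologicallyNilpotent
      ((l2Shift.toContinuousLinearMap : ℓ²(E) →L[𝕜] ℓ²(E)) ∘L lpMap a) := by
  set R : ℓ²(E) →L[𝕜] ℓ²(E) := l2Shift.toContinuousLinearMap
  have hR : ‖R‖ ≤ 1 := R.opNorm_le_bound zero_le_one fun v => by
    rw [one_mul]
    exact (l2Shift.norm_map v).le
  refine squeeze_zero_norm' ?_ (tendsto_zero_iff_norm_tendsto_zero.1 ha)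
  filter_upwards [eventually_gt_atTop 0] with k hk
  calc ‖(R * lpMap a) ^ k‖ = ‖R ^ k * lpMap (a ^ k)‖ := by
        rw [(commute_l2Shift_lpMap a).mul_pow, lpMap_pow]
    _ ≤ ‖R ^ k‖ * ‖(lpMap (a ^ k) : ℓ²(E) →L[𝕜] ℓ²(E))‖ := norm_mul_le _ _
    _ ≤ 1 * ‖a ^ k‖ := by
        gcongr
        · exact (norm_pow_le' R hk).trans (pow_le_one₀ (norm_nonneg _) hR)
        · exact norm_lpMap_le _
    _ = ‖a ^ k‖ := one_mul _

end NormedSpace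

section InnerProductSpace

variable {𝕜 E F G : Type*} [RCLike 𝕜] [NormedAddCommGroup E] [InnerProductSpace 𝕜 E]
  [NormedAddCommGroup F] [InnerProductSpace 𝕜 F] [CompleteSpace F]
  [NormedAddCommGroup G] [InnerProductSpace 𝕜 G] [CompleteSpace G]

theorem exists_isSelfAdjoint_re_inner_eq_norm_sq_sub [CompleteSpace E] (f : E →L[𝕜] F)
    (g : E →L[𝕜] G) : ∃ P : E →L[𝕜] E, IsSelfAdjoint P ∧
      ∀ x, RCLike.re ⟪x, P x⟫_𝕜 = ‖f x‖ ^ 2 - ‖g x‖ ^ 2 := by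
  refine ⟨f.adjoint ∘L f - g.adjoint ∘L g, f.isPositive_adjoint_comp_self.isSelfAdjoint.sub
    g.isPositive_adjoint_comp_self.isSelfAdjoint, fun x => ?_⟩
  rw [_root_.sub_apply, inner_sub_right, map_sub]
  simp only [ContinuousLinearMap.comp_apply, ContinuousLinearMap.adjoint_inner_right,
    inner_self_eq_norm_sq]

theorem exists_isGreatest_norm_sq_sub_norm_sq {E : Type*} [NormedAddCommGroup E]
    [NormedSpace 𝕜 E] (L : E × F →L[𝕜] G)
    (hL : ‖L ∘L ContinuousLinearMap.inr 𝕜 E F‖ < 1) :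
    ∃ K : E →L[𝕜] F, ∀ x, IsGreatest (Set.range fun w => ‖L (x, w)‖ ^ 2 - ‖w‖ ^ 2)
      (‖L (x, K x)‖ ^ 2 - ‖K x‖ ^ 2) := by
  set T := L ∘L ContinuousLinearMap.inr 𝕜 E F
  have hLT : ∀ x w v, L (x, w + v) = L (x, w) + T v := fun x w v => by
    simp [T, ← map_add]
  have hunit : IsUnit (1 - T.adjoint ∘L T) := isUnit_one_sub_of_norm_lt_one <| by
    rw [ContinuousLinearMap.norm_adjoint_comp_self]
    exact mul_lt_one_of_nonneg_of_lt_one_left (norm_nonneg _) hL hL.le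
  set K := Ring.inverse (1 - T.adjoint ∘L T) ∘L T.adjoint ∘L L ∘L ContinuousLinearMap.inl 𝕜 E F
  have hstationary : ∀ x, T.adjoint (L (x, K x)) = K x := fun x => by
    calc T.adjoint (L (x, K x)) = T.adjoint (L (x, 0)) + T.adjoint (T (K x)) := by
          rw [← map_add, ← hLT, zero_add]
      _ = K x := (inverse_one_sub_apply_eq_add hunit _).symm
  have hcontract : ∀ v, ‖T v‖ ^ 2 ≤ ‖v‖ ^ 2 := fun v =>
    pow_le_pow_left₀ (norm_nonneg _) ((T.le_of_opNorm_le hL.le v).trans_eq (one_mul _)) 2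
  refine ⟨K, fun x => ⟨⟨K x, rfl⟩, ?_⟩⟩
  rintro _ ⟨w, rfl⟩
  obtain ⟨v, rfl⟩ : ∃ v, w = K x + v := ⟨w - K x, (add_sub_cancel _ _).symm⟩
  calc ‖L (x, K x + v)‖ ^ 2 - ‖K x + v‖ ^ 2
      = ‖L (x, K x)‖ ^ 2 - ‖K x‖ ^ 2 - (‖v‖ ^ 2 - ‖T v‖ ^ 2) := by
        rw [hLT, norm_add_sq (𝕜 := 𝕜), norm_add_sq (𝕜 := 𝕜) (K x),
          ← ContinuousLinearMap.adjoint_inner_left, hstationary]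
        ring
    _ ≤ ‖L (x, K x)‖ ^ 2 - ‖K x‖ ^ 2 := by linarith [hcontract v]

theorem exists_isSelfAdjoint_isGreatest [CompleteSpace E] (L : E × F →L[𝕜] G)
    (hL : ‖L ∘L ContinuousLinearMap.inr 𝕜 E F‖ < 1) :
    ∃ P : E →L[𝕜] E, IsSelfAdjoint P ∧ ∀ x,
      IsGreatest (Set.range fun w => ‖L (x, w)‖ ^ 2 - ‖w‖ ^ 2) (RCLike.re ⟪x, P x⟫_𝕜) := by
  obtain ⟨K, hK⟩ := exists_isGreatest_norm_sq_sub_norm_sq L hL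
  obtain ⟨P, hP, hval⟩ := exists_isSelfAdjoint_re_inner_eq_norm_sq_sub
    (L ∘L (ContinuousLinearMap.id 𝕜 E).prod K) K
  exact ⟨P, hP, fun x => (hval x).symm ▸ hK x⟩

end InnerProductSpace

/-- A discrete-time linear system `x (k + 1) = A (x k) + B (w k)`, `z k = C (x k) + D (w k)` with
state space `X`, input space `U` and output space `Z`. -/
structure LinearSystem (𝕜 X U Z : Type*) [RCLike 𝕜] [NormedAddCommGroup X] [NormedSpace 𝕜 X]
    [NormedAddCommGroup U] [NormedSpace 𝕜 U] [NormedAddCommGroup Z] [NormedSpace 𝕜 Z] where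
  A : X →L[𝕜] X
  B : U →L[𝕜] X
  C : X →L[𝕜] Z
  D : U →L[𝕜] Z

namespace LinearSystem

section NormedSpace

variable {𝕜 X U Z : Type*} [RCLike 𝕜] [NormedAddCommGroup X] [NormedSpace 𝕜 X]
  [NormedAddCommGroup U] [NormedSpace 𝕜 U] [NormedAddCommGroup Z] [NormedSpace 𝕜 Z]
  (S : LinearSystem 𝕜 X U Z)

/-- The operator sending an initial state and a finite-energy input to the state sequence. The
recursion is written as `x = l2Cons x₀ 0 + shift (A x + B w)` and solved for `x`, so the value is
junk when the resulting operator `1 - shift ∘ A` is not invertible. -/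
noncomputable def stateMap : X × ℓ²(U) →L[𝕜] ℓ²(X) :=
  Ring.inverse (1 - l2Shift.toContinuousLinearMap ∘L lpMap S.A) ∘L
    (lp.singleContinuousLinearMap 𝕜 (fun _ : ℕ => X) 2 0).coprod
      (l2Shift.toContinuousLinearMap ∘L lpMap S.B)

/-- The operator sending an initial state and a finite-energy input to the output sequence. -/
noncomputable def outputMap : X × ℓ²(U) →L[𝕜] ℓ²(Z) :=
  (lpMap S.C ∘L S.stateMap) + (lpMap S.D ∘L ContinuousLinearMap.snd 𝕜 X ℓ²(U))

/-- The input-output operator on `ℓ²` for zero initial state. -/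
noncomputable def inputOutputMap : ℓ²(U) →L[𝕜] ℓ²(Z) :=
  S.outputMap ∘L ContinuousLinearMap.inr 𝕜 X ℓ²(U)

@[simp]
theorem outputMap_apply (x : X) (w : ℓ²(U)) (k : ℕ) :
    S.outputMap (x, w) k = S.C (S.stateMap (x, w) k) + S.D (w k) := rfl

variable [CompleteSpace X] {S} (hA : IsTopologicallyNilpotent S.A)
include hA

theorem stateMap_eq_l2Cons (x : X) (w : ℓ²(U)) :
    S.stateMap (x, w) = l2Cons x (lpMap S.A (S.stateMap (x, w)) + lpMap S.B w) := by
  have hunit : IsUnit (1 - (l2Shift.toContinuousLinearMap : ℓ²(X) →L[𝕜] ℓ²(X)) ∘L lpMap S.A) :=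
    isUnit_one_sub_of_isTopologicallyNilpotent (isTopologicallyNilpotent_l2Shift_comp_lpMap hA)
  have h : S.stateMap (x, w) = lp.single 2 0 x + l2Shift (𝕜 := 𝕜) (lpMap S.B w) +
      l2Shift (𝕜 := 𝕜) (lpMap S.A (S.stateMap (x, w))) :=
    inverse_one_sub_apply_eq_add hunit (lp.single 2 0 x + l2Shift (𝕜 := 𝕜) (lpMap S.B w))
  rw [← single_add_l2Shift (𝕜 := 𝕜), map_add, add_comm (l2Shift _), ← add_assoc]
  exact h

theorem stateMap_zero (x : X) (w : ℓ²(U)) : S.stateMap (x, w) 0 = x := by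
  rw [stateMap_eq_l2Cons hA, l2Cons_zero]

theorem stateMap_succ (x : X) (w : ℓ²(U)) (k : ℕ) :
    S.stateMap (x, w) (k + 1) = S.A (S.stateMap (x, w) k) + S.B (w k) := by
  conv_lhs => rw [stateMap_eq_l2Cons hA, l2Cons_succ]
  rfl

theorem stateMap_apply_eq {x : ℕ → X} {w : ℓ²(U)}
    (hx : ∀ k, x (k + 1) = S.A (x k) + S.B (w k)) (k : ℕ) : S.stateMap (x 0, w) k = x k := by
  induction k with
  | zero => exact stateMap_zero hA _ _
  | succ k ih => rw [stateMap_succ hA, ih, hx]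

theorem inputOutputMap_apply_eq {x : ℕ → X} {w : ℓ²(U)} (hx0 : x 0 = 0)
    (hx : ∀ k, x (k + 1) = S.A (x k) + S.B (w k)) (k : ℕ) :
    S.inputOutputMap w k = S.C (x k) + S.D (w k) := by
  rw [← stateMap_apply_eq hA hx, hx0]
  rfl

theorem stateMap_l2Cons (x : X) (u : U) (w : ℓ²(U)) :
    S.stateMap (x, l2Cons u w) = l2Cons x (S.stateMap (S.A x + S.B u, w)) := by
  ext k
  refine stateMap_apply_eq hA (x := l2Cons x (S.stateMap (S.A x + S.B u, w))) ?_ k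
  rintro (_ | k)
  · simp [stateMap_zero hA]
  · simp [stateMap_succ hA]

theorem outputMap_l2Cons (x : X) (u : U) (w : ℓ²(U)) :
    S.outputMap (x, l2Cons u w) =
      l2Cons (S.C x + S.D u) (S.outputMap (S.A x + S.B u, w)) := by
  ext (_ | k)
  · simp [stateMap_zero hA]
  · simp [stateMap_l2Cons hA]

end NormedSpace

section InnerProductSpace

variable {𝕜 X U Z : Type*} [RCLike 𝕜] [NormedAddCommGroup X] [InnerProductSpace 𝕜 X]
  [NormedAddCommGroup U] [InnerProductSpace 𝕜 U] [NormedAddCommGroup Z] [InnerProductSpace 𝕜 Z]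

/-- The margin by which the quadratic storage function `x ↦ ⟪x, P x⟫` satisfies the dissipation
inequality for the supply rate `‖u‖² - ‖z‖²` over one step from state `x` with input `u`. -/
noncomputable def kypForm (S : LinearSystem 𝕜 X U Z) (P : X →L[𝕜] X) (x : X) (u : U) : ℝ :=
  RCLike.re ⟪x, P x⟫_𝕜 + ‖u‖ ^ 2 - RCLike.re ⟪S.A x + S.B u, P (S.A x + S.B u)⟫_𝕜
    - ‖S.C x + S.D u‖ ^ 2

/-- Strict dissipativity with quadratic storage function `x ↦ ⟪x, P x⟫`: the form `kypForm` is
coercive. -/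
def IsStrictStorage (S : LinearSystem 𝕜 X U Z) (P : X →L[𝕜] X) : Prop :=
  ∃ ε > 0, ∀ x u, ε * (‖x‖ ^ 2 + ‖u‖ ^ 2) ≤ S.kypForm P x u

variable [CompleteSpace X] {S : LinearSystem 𝕜 X U Z}

theorem hasSum_kypForm (hA : IsTopologicallyNilpotent S.A) (P : X →L[𝕜] X) (x : X) (w : ℓ²(U)) :
    HasSum (fun k => S.kypForm P (S.stateMap (x, w) k) (w k))
      (RCLike.re ⟪x, P x⟫_𝕜 + ‖w‖ ^ 2 - ‖S.outputMap (x, w)‖ ^ 2) := by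
  set V : ℝ := RCLike.re ⟪S.stateMap (x, w), lpMap P (S.stateMap (x, w))⟫_𝕜
  have hstorage : HasSum (fun k => RCLike.re ⟪S.stateMap (x, w) k, P (S.stateMap (x, w) k)⟫_𝕜) V :=
    (lp.hasSum_inner _ _).mapL RCLike.reCLM
  have hnext := (hasSum_nat_add_iff' 1).2 hstorage
  simp only [Finset.sum_range_one, stateMap_zero hA, stateMap_succ hA] at hnext
  rw [show RCLike.re ⟪x, P x⟫_𝕜 + ‖w‖ ^ 2 - ‖S.outputMap (x, w)‖ ^ 2 =
    V + ‖w‖ ^ 2 - (V - RCLike.re ⟪x, P x⟫_𝕜) - ‖S.outputMap (x, w)‖ ^ 2 by ring]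
  exact ((hstorage.add (hasSum_norm_sq w)).sub hnext).sub (hasSum_norm_sq (S.outputMap (x, w)))

theorem norm_inputOutputMap_lt_one_of_isStrictStorage (hA : IsTopologicallyNilpotent S.A)
    {P : X →L[𝕜] X} (hP : S.IsStrictStorage P) : ‖S.inputOutputMap‖ < 1 := by
  obtain ⟨ε, hε, hdiss⟩ := hP
  refine opNorm_lt_one_of_norm_sq_le S.inputOutputMap (sub_lt_self 1 hε) fun w => ?_
  have hle : ε * ‖w‖ ^ 2 ≤ ‖w‖ ^ 2 - ‖S.inputOutputMap w‖ ^ 2 := by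
    have hsum := hasSum_kypForm hA P 0 w
    rw [inner_zero_left, map_zero, zero_add] at hsum
    refine hasSum_le (fun k => ?_) ((hasSum_norm_sq w).mul_left ε) hsum
    exact (mul_le_mul_of_nonneg_left (le_add_of_nonneg_left (sq_nonneg _)) hε.le).trans
      (hdiss _ _)
  linarith

/-- The output sequence augmented by the state and input sequences scaled by `c`; penalizing the
latter is what turns the Bellman inequality for the optimal value into a strict one. -/
noncomputable def penalizedOutputMap (S : LinearSystem 𝕜 X U Z) (c : 𝕜) :
    X × ℓ²(U) →L[𝕜] WithLp 2 (ℓ²(Z) × WithLp 2 (ℓ²(X) × ℓ²(U))) :=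
  l2Prod S.outputMap (c • l2Prod S.stateMap (ContinuousLinearMap.snd 𝕜 X ℓ²(U)))

omit [CompleteSpace X] in
theorem norm_penalizedOutputMap_sq (c : 𝕜) (x : X) (w : ℓ²(U)) :
    ‖S.penalizedOutputMap c (x, w)‖ ^ 2 =
      ‖S.outputMap (x, w)‖ ^ 2 + ‖c‖ ^ 2 * (‖S.stateMap (x, w)‖ ^ 2 + ‖w‖ ^ 2) := by
  rw [penalizedOutputMap, norm_l2Prod_apply_sq, _root_.smul_apply, norm_smul, mul_pow,
    norm_l2Prod_apply_sq, ContinuousLinearMap.coe_snd']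

omit [CompleteSpace X] in
theorem exists_norm_penalizedOutputMap_comp_inr_lt_one (hS : ‖S.inputOutputMap‖ < 1) :
    ∃ c : 𝕜, c ≠ 0 ∧
      ‖S.penalizedOutputMap c ∘L ContinuousLinearMap.inr 𝕜 X ℓ²(U)‖ < 1 := by
  set Ψ := S.stateMap ∘L ContinuousLinearMap.inr 𝕜 X ℓ²(U)
  have hcont : Continuous fun c : 𝕜 => ‖S.inputOutputMap‖ ^ 2 + ‖c‖ ^ 2 * (‖Ψ‖ ^ 2 + 1) := by
    fun_prop
  have hev := (hcont.tendsto 0).eventually_lt_const (u := 1) <| by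
    simpa using hS
  obtain ⟨c, hc1, hc0⟩ :=
    ((hev.filter_mono nhdsWithin_le_nhds).and (eventually_mem_nhdsWithin (s := {0}ᶜ))).exists
  refine ⟨c, hc0, opNorm_lt_one_of_norm_sq_le _ hc1 fun w => ?_⟩
  have hT : ‖S.outputMap (0, w)‖ ≤ ‖S.inputOutputMap‖ * ‖w‖ := S.inputOutputMap.le_opNorm w
  have hΨ : ‖S.stateMap (0, w)‖ ≤ ‖Ψ‖ * ‖w‖ := Ψ.le_opNorm w
  calc ‖S.penalizedOutputMap c (0, w)‖ ^ 2
      = ‖S.outputMap (0, w)‖ ^ 2 + ‖c‖ ^ 2 * (‖S.stateMap (0, w)‖ ^ 2 + ‖w‖ ^ 2) :=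
        norm_penalizedOutputMap_sq c 0 w
    _ ≤ (‖S.inputOutputMap‖ * ‖w‖) ^ 2 + ‖c‖ ^ 2 * ((‖Ψ‖ * ‖w‖) ^ 2 + ‖w‖ ^ 2) := by gcongr
    _ = (‖S.inputOutputMap‖ ^ 2 + ‖c‖ ^ 2 * (‖Ψ‖ ^ 2 + 1)) * ‖w‖ ^ 2 := by ring

theorem norm_penalizedOutputMap_l2Cons_sq (hA : IsTopologicallyNilpotent S.A) (c : 𝕜) (x : X)
    (u : U) (w : ℓ²(U)) :
    ‖S.penalizedOutputMap c (x, l2Cons u w)‖ ^ 2 =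
      ‖S.C x + S.D u‖ ^ 2 + ‖c‖ ^ 2 * (‖x‖ ^ 2 + ‖u‖ ^ 2) +
        ‖S.penalizedOutputMap c (S.A x + S.B u, w)‖ ^ 2 := by
  simp only [norm_penalizedOutputMap_sq, outputMap_l2Cons hA, stateMap_l2Cons hA, norm_l2Cons_sq]
  ring

theorem exists_isStrictStorage_of_norm_inputOutputMap_lt_one [CompleteSpace U] [CompleteSpace Z]
    (hA : IsTopologicallyNilpotent S.A) (hS : ‖S.inputOutputMap‖ < 1) :
    ∃ P : X →L[𝕜] X, IsSelfAdjoint P ∧ S.IsStrictStorage P := by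
  obtain ⟨c, hc, hlt⟩ := exists_norm_penalizedOutputMap_comp_inr_lt_one hS
  obtain ⟨P, hP, hvalue⟩ := exists_isSelfAdjoint_isGreatest (S.penalizedOutputMap c) hlt
  refine ⟨P, hP, ‖c‖ ^ 2, by positivity, fun x u => ?_⟩
  obtain ⟨w, hw⟩ := (hvalue (S.A x + S.B u)).1
  have hbellman := (hvalue x).2 ⟨l2Cons u w, rfl⟩
  simp only [norm_penalizedOutputMap_l2Cons_sq hA, norm_l2Cons_sq] at hbellman hw
  rw [kypForm]
  linarith

end InnerProductSpace

end LinearSystem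

theorem kyp_lemma_strict_general {𝕜 X U Z : Type*} [RCLike 𝕜]
    [NormedAddCommGroup X] [InnerProductSpace 𝕜 X] [CompleteSpace X]
    [NormedAddCommGroup U] [InnerProductSpace 𝕜 U] [CompleteSpace U]
    [NormedAddCommGroup Z] [InnerProductSpace 𝕜 Z] [CompleteSpace Z]
    (S : LinearSystem 𝕜 X U Z) (hA : IsTopologicallyNilpotent S.A) :
    ‖S.inputOutputMap‖ < 1 ↔ ∃ P : X →L[𝕜] X, IsSelfAdjoint P ∧ S.IsStrictStorage P :=
  ⟨LinearSystem.exists_isStrictStorage_of_norm_inputOutputMap_lt_one hA, fun ⟨_, _, hP⟩ =>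
    LinearSystem.norm_inputOutputMap_lt_one_of_isStrictStorage hA hP⟩

section Matrix

variable {𝕜 ι κ τ : Type*} [RCLike 𝕜] [Fintype ι] [Fintype τ]

theorem re_inner_toLp (x y : ι → 𝕜) :
    RCLike.re ⟪WithLp.toLp 2 x, WithLp.toLp 2 y⟫_𝕜 = RCLike.re (star x ⬝ᵥ y) := by
  rw [EuclideanSpace.inner_toLp_toLp, dotProduct_comm]

theorem norm_toLp_sq (x : ι → 𝕜) : ‖WithLp.toLp 2 x‖ ^ 2 = RCLike.re (star x ⬝ᵥ x) := by
  rw [← re_inner_toLp, inner_self_eq_norm_sq]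

theorem norm_toLp_sq_eq_sum (x : ι → 𝕜) : ‖WithLp.toLp 2 x‖ ^ 2 = ∑ i, ‖x i‖ ^ 2 :=
  EuclideanSpace.norm_sq_eq _

theorem norm_toLp_sumElim_sq [Fintype κ] (x : ι → 𝕜) (u : κ → 𝕜) :
    ‖WithLp.toLp 2 (Sum.elim x u)‖ ^ 2 = ‖WithLp.toLp 2 x‖ ^ 2 + ‖WithLp.toLp 2 u‖ ^ 2 := by
  simp [norm_toLp_sq_eq_sum, Fintype.sum_sum_type]

theorem star_dotProduct_conjTranspose_mulVec [Fintype κ] (M : Matrix ι κ 𝕜) (x : κ → 𝕜)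
    (y : ι → 𝕜) : star x ⬝ᵥ (Mᴴ *ᵥ y) = star (M *ᵥ x) ⬝ᵥ y := by
  rw [dotProduct_mulVec, star_mulVec]

section Coercivity

open scoped MatrixOrder Matrix.Norms.L2Operator

theorem exists_pos_mul_norm_sq_le_of_posDef {M : Matrix ι ι 𝕜} (hM : M.PosDef) :
    ∃ ε > 0, ∀ v : ι → 𝕜, ε * ‖WithLp.toLp 2 v‖ ^ 2 ≤ RCLike.re (star v ⬝ᵥ M *ᵥ v) := by
  classical
  cases isEmpty_or_nonempty ι
  · exact ⟨1, one_pos, fun v => by simp [norm_toLp_sq]⟩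
  obtain ⟨ε, hε, hle⟩ := (CFC.exists_pos_algebraMap_le_iff hM.isHermitian).2
    fun _ => hM.isStrictlyPositive.spectrum_pos
  refine ⟨ε, hε, fun v => ?_⟩
  have hdiff := (Matrix.le_iff.1 hle).re_dotProduct_nonneg v
  rw [sub_mulVec, dotProduct_sub, map_sub, sub_nonneg] at hdiff
  rwa [norm_toLp_sq, ← RCLike.smul_re, ← dotProduct_smul, ← one_mulVec (ε • v), mulVec_smul,
    ← smul_mulVec, ← Algebra.algebraMap_eq_smul_one]

end Coercivity

theorem posDef_iff_exists_pos_mul_norm_sq_le {M : Matrix ι ι 𝕜} (hM : M.IsHermitian) :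
    M.PosDef ↔
      ∃ ε > 0, ∀ v : ι → 𝕜, ε * ‖WithLp.toLp 2 v‖ ^ 2 ≤ RCLike.re (star v ⬝ᵥ M *ᵥ v) := by
  refine ⟨exists_pos_mul_norm_sq_le_of_posDef, fun ⟨ε, hε, hle⟩ => ?_⟩
  refine .of_dotProduct_mulVec_pos hM fun v hv => RCLike.pos_iff.2 ⟨?_, ?_⟩
  · have hv' : WithLp.toLp 2 v ≠ 0 := by simpa using hv
    exact (by positivity : 0 < ε * ‖WithLp.toLp 2 v‖ ^ 2).trans_le (hle v)
  · exact hM.im_star_dotProduct_mulVec_self v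

/-- The matrix of the KYP inequality, with the sign for which the inequality reads
`(kypMatrix A B C D P).PosDef`. -/
def kypMatrix [DecidableEq κ] (A : Matrix ι ι 𝕜) (B : Matrix ι κ 𝕜) (C : Matrix τ ι 𝕜)
    (D : Matrix τ κ 𝕜) (P : Matrix ι ι 𝕜) : Matrix (ι ⊕ κ) (ι ⊕ κ) 𝕜 :=
  -(fromBlocks (Aᴴ * P * A - P) (Aᴴ * P * B) (Bᴴ * P * A) (Bᴴ * P * B) +
    fromBlocks (Cᴴ * C) (Cᴴ * D) (Dᴴ * C) (Dᴴ * D - 1))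

theorem isHermitian_kypMatrix [DecidableEq κ] (A : Matrix ι ι 𝕜) (B : Matrix ι κ 𝕜)
    (C : Matrix τ ι 𝕜) (D : Matrix τ κ 𝕜) {P : Matrix ι ι 𝕜} (hP : P.IsHermitian) :
    (kypMatrix A B C D P).IsHermitian := by
  rw [Matrix.IsHermitian, kypMatrix]
  simp only [conjTranspose_neg, conjTranspose_add, fromBlocks_conjTranspose, conjTranspose_sub,
    conjTranspose_mul, conjTranspose_conjTranspose, conjTranspose_one, hP.eq, Matrix.mul_assoc]

namespace LinearSystem

variable [Fintype κ] [DecidableEq ι] [DecidableEq κ]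

/-- The linear system between Euclidean spaces with the given coefficient matrices. -/
noncomputable def ofMatrix (A : Matrix ι ι 𝕜) (B : Matrix ι κ 𝕜) (C : Matrix τ ι 𝕜)
    (D : Matrix τ κ 𝕜) :
    LinearSystem 𝕜 (EuclideanSpace 𝕜 ι) (EuclideanSpace 𝕜 κ) (EuclideanSpace 𝕜 τ) where
  A := toEuclideanCLM (𝕜 := 𝕜) A
  B := (toEuclideanLin B).toContinuousLinearMap
  C := (toEuclideanLin C).toContinuousLinearMap
  D := (toEuclideanLin D).toContinuousLinearMap

variable (A : Matrix ι ι 𝕜) (B : Matrix ι κ 𝕜) (C : Matrix τ ι 𝕜) (D : Matrix τ κ 𝕜)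

theorem ofMatrix_stateUpdate (x : ι → 𝕜) (u : κ → 𝕜) :
    (ofMatrix A B C D).A (WithLp.toLp 2 x) + (ofMatrix A B C D).B (WithLp.toLp 2 u) =
      WithLp.toLp 2 (A *ᵥ x + B *ᵥ u) := rfl

theorem ofMatrix_output (x : ι → 𝕜) (u : κ → 𝕜) :
    (ofMatrix A B C D).C (WithLp.toLp 2 x) + (ofMatrix A B C D).D (WithLp.toLp 2 u) =
      WithLp.toLp 2 (C *ᵥ x + D *ᵥ u) := rfl

theorem kypForm_ofMatrix (P : Matrix ι ι 𝕜) (x : ι → 𝕜) (u : κ → 𝕜) :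
    (ofMatrix A B C D).kypForm (toEuclideanCLM (𝕜 := 𝕜) P) (WithLp.toLp 2 x) (WithLp.toLp 2 u) =
      RCLike.re (star (Sum.elim x u) ⬝ᵥ kypMatrix A B C D P *ᵥ Sum.elim x u) := by
  have hstar : star (Sum.elim x u) = Sum.elim (star x) (star u) := by
    ext (_ | _) <;> rfl
  simp only [kypForm, ofMatrix_stateUpdate, ofMatrix_output, toEuclideanCLM_toLp, re_inner_toLp,
    norm_toLp_sq, ← map_add, ← map_sub]
  rw [kypMatrix, fromBlocks_add, neg_mulVec, fromBlocks_mulVec, hstar, dotProduct_neg,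
    sumElim_dotProduct_sumElim]
  simp only [Sum.elim_comp_inl, Sum.elim_comp_inr, add_mulVec, sub_mulVec, ← mulVec_mulVec,
    one_mulVec, dotProduct_add, dotProduct_sub, star_dotProduct_conjTranspose_mulVec,
    mulVec_add, star_add, add_dotProduct]
  congr 1
  ring

theorem isStrictStorage_ofMatrix_iff {P : Matrix ι ι 𝕜} (hP : P.IsHermitian) :
    (ofMatrix A B C D).IsStrictStorage (toEuclideanCLM (𝕜 := 𝕜) P) ↔
      (kypMatrix A B C D P).PosDef := by
  rw [posDef_iff_exists_pos_mul_norm_sq_le (isHermitian_kypMatrix A B C D hP)]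
  refine exists_congr fun ε => and_congr_right fun _ => ⟨fun h v => ?_, fun h x u => ?_⟩
  · rw [← Sum.elim_comp_inl_inr v, norm_toLp_sumElim_sq, ← kypForm_ofMatrix]
    exact h _ _
  · have hxu := h (Sum.elim x.ofLp u.ofLp)
    rwa [norm_toLp_sumElim_sq, ← kypForm_ofMatrix] at hxu

theorem isSelfAdjoint_toEuclideanCLM_iff {P : Matrix ι ι 𝕜} :
    IsSelfAdjoint (toEuclideanCLM (𝕜 := 𝕜) P) ↔ P.IsHermitian := by
  rw [isSelfAdjoint_iff, ← map_star, EquivLike.apply_eq_iff_eq]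
  rfl

theorem exists_isSelfAdjoint_isStrictStorage_ofMatrix_iff :
    (∃ P, IsSelfAdjoint P ∧ (ofMatrix A B C D).IsStrictStorage P) ↔
      ∃ P : Matrix ι ι 𝕜, P.IsHermitian ∧ (kypMatrix A B C D P).PosDef := by
  rw [(EquivLike.surjective (toEuclideanCLM (n := ι) (𝕜 := 𝕜))).exists]
  refine exists_congr fun P => ?_
  rw [isSelfAdjoint_toEuclideanCLM_iff]
  exact and_congr_right fun hP => isStrictStorage_ofMatrix_iff A B C D hP

theorem isTopologicallyNilpotent_ofMatrix_A {A : Matrix ι ι ℂ} (hA : spectralRadius ℂ A < 1)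
    (B : Matrix ι κ ℂ) (C : Matrix τ ι ℂ) (D : Matrix τ κ ℂ) :
    IsTopologicallyNilpotent (ofMatrix A B C D).A := by
  refine isTopologicallyNilpotent_of_spectralRadius_lt_one ?_
  have hspec : spectrum ℂ (toEuclideanCLM (n := ι) (𝕜 := ℂ) A) = spectrum ℂ A :=
    AlgEquiv.spectrum_eq (toEuclideanCLM (n := ι) (𝕜 := ℂ)) A
  rwa [ofMatrix, spectralRadius, hspec]

end LinearSystem

theorem muInfty_eq_norm_inputOutputMap_sq {n m p : ℕ} {A : Matrix (Fin n) (Fin n) ℂ}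
    (hA : spectralRadius ℂ A < 1) (B : Matrix (Fin n) (Fin m) ℂ) (C : Matrix (Fin p) (Fin n) ℂ)
    (D : Matrix (Fin p) (Fin m) ℂ) :
    muInfty A B C D = ‖(LinearSystem.ofMatrix A B C D).inputOutputMap‖ ^ 2 := by
  have hS := LinearSystem.isTopologicallyNilpotent_ofMatrix_A hA B C D
  rw [← sSup_norm_sq_image_sphere, muInfty]
  congr 1
  ext r
  simp only [← norm_toLp_sq_eq_sum]
  constructor
  · rintro ⟨w, x, z, hw, hw1, hx0, hx, hz, rfl⟩
    set W : ℓ²(EuclideanSpace ℂ (Fin m)) := ⟨fun k => WithLp.toLp 2 (w k), memℓp_two_iff.2 hw⟩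
    have hZ := LinearSystem.inputOutputMap_apply_eq hS (x := fun k => WithLp.toLp 2 (x k)) (w := W)
      (congrArg _ hx0) fun k => congrArg _ (hx k)
    refine ⟨W, tsum_norm_sq_eq_one_iff.1 hw1, ?_⟩
    refine (hasSum_norm_sq _).tsum_eq.symm.trans (tsum_congr fun k => ?_)
    rw [hZ, hz]
    rfl
  · rintro ⟨w, hw, rfl⟩
    set x := (LinearSystem.ofMatrix A B C D).stateMap (0, w)
    set z := (LinearSystem.ofMatrix A B C D).inputOutputMap w
    exact ⟨fun k => (w k).ofLp, fun k => (x k).ofLp, fun k => (z k).ofLp,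
      (hasSum_norm_sq w).summable, tsum_norm_sq_eq_one_iff.2 hw,
      congrArg WithLp.ofLp (LinearSystem.stateMap_zero hS 0 w),
      fun k => congrArg WithLp.ofLp (LinearSystem.stateMap_succ hS 0 w k), fun k => rfl,
      (hasSum_norm_sq z).tsum_eq.symm⟩

end Matrix

/-- the strict discrete-time KYP lemma: `μ∞ < 1` iff the KYP LMI has a
Hermitian solution with strict inequality. -/
theorem kyp_lemma_strict {n m p : ℕ}
    (A : Matrix (Fin n) (Fin n) ℂ) (hA : spectralRadius ℂ A < 1)
    (B : Matrix (Fin n) (Fin m) ℂ) (C : Matrix (Fin p) (Fin n) ℂ)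
    (D : Matrix (Fin p) (Fin m) ℂ) :
    muInfty A B C D < 1 ↔
      ∃ P : Matrix (Fin n) (Fin n) ℂ, P.IsHermitian ∧
        (-(fromBlocks (Aᴴ * P * A - P) (Aᴴ * P * B) (Bᴴ * P * A) (Bᴴ * P * B) +
            fromBlocks (Cᴴ * C) (Cᴴ * D) (Dᴴ * C)
              (Dᴴ * D - (1 : Matrix (Fin m) (Fin m) ℂ)))).PosDef := by
  rw [muInfty_eq_norm_inputOutputMap_sq hA, sq_lt_one_iff₀ (norm_nonneg _),
    kyp_lemma_strict_general _ (LinearSystem.isTopologicallyNilpotent_ofMatrix_A hA B C D)]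
  exact LinearSystem.exists_isSelfAdjoint_isStrictStorage_ofMatrix_iff A B C D
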